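/- arXiv:2110.12065 — 5 statements merged into one kernel-verified Lean document; each statement's English description precedes it below -/
import Mathlib

section
/- The min1 product is a Mercer-type (positive semidefinite) kernel: for any vectors x_1, …, x_N ∈ ℝⁿ, the N×N Gram matrix K with entries K_{jk} = x_j ⊙ x_k is symmetric positive semidefinite, i.e. for all c ∈ ℝᴺ, Σ_{j,k} c_j c_k (x_j ⊙ x_k) ≥ 0. -/
/-!
Coordinatewise, `sign (u * v) * min |u| |v| = (sign u * sign v) * min |u| |v|`, so the signs can be
absorbed into the coefficients and it suffices that `min` is a positive semidefinite kernel on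
`[0, ∞)`. This holds because `min a b = ∫ 𝟙_(0,a] 𝟙_(0,b]` is an `L²` inner product, whence the
quadratic form is the integral of a square (`min_kernel_nonneg`).
-/

/-- min1 product: `w ⊙ x = ∑ i, sign (w i * x i) * min |w i| |x i|`. -/
noncomputable def min1Prod {n : ℕ} (w x : Fin n → ℝ) : ℝ :=
  ∑ i, Real.sign (w i * x i) * min |w i| |x i|

open MeasureTheory in
/-- `min` on the nonnegative reals as the `L²` inner product of indicators of `(0, a]`, `(0, b]`. -/
lemma integral_indicator_mul_indicator {a b : ℝ} (ha : 0 ≤ a) (hb : 0 ≤ b) :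
    ∫ t, (Set.Ioc 0 a).indicator (1 : ℝ → ℝ) t * (Set.Ioc 0 b).indicator (1 : ℝ → ℝ) t
      = min a b := by
  have h : (fun t => (Set.Ioc 0 a).indicator (1 : ℝ → ℝ) t * (Set.Ioc 0 b).indicator (1 : ℝ → ℝ) t)
      = (Set.Ioc 0 (min a b)).indicator (1 : ℝ → ℝ) := by
    rw [show Set.Ioc 0 (min a b) = Set.Ioc 0 a ∩ Set.Ioc 0 b by simp [Set.Ioc_inter_Ioc],
      Set.inter_indicator_one]
    rfl
  rw [h, integral_indicator_one measurableSet_Ioc]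
  simp [ha, hb]

open MeasureTheory in
lemma integrable_indicator_mul_indicator (a b : ℝ) :
    Integrable fun t =>
      (Set.Ioc 0 a).indicator (1 : ℝ → ℝ) t * (Set.Ioc 0 b).indicator (1 : ℝ → ℝ) t := by
  have h : (fun t => (Set.Ioc 0 a).indicator (1 : ℝ → ℝ) t * (Set.Ioc 0 b).indicator (1 : ℝ → ℝ) t)
      = (Set.Ioc 0 a ∩ Set.Ioc 0 b).indicator (fun _ => (1 : ℝ)) :=
    (Set.inter_indicator_one (M₀ := ℝ) (s := Set.Ioc (0 : ℝ) a) (t := Set.Ioc 0 b)).symm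
  rw [h, Set.Ioc_inter_Ioc, integrable_indicator_iff measurableSet_Ioc]
  simp

open MeasureTheory in
lemma min_kernel_nonneg {ι : Type*} [Fintype ι] (a d : ι → ℝ) (ha : ∀ j, 0 ≤ a j) :
    0 ≤ ∑ j, ∑ k, d j * d k * min (a j) (a k) := by
  have h : ∑ j, ∑ k, d j * d k * min (a j) (a k)
      = ∫ t, (∑ j, d j * (Set.Ioc 0 (a j)).indicator (1 : ℝ → ℝ) t) ^ 2 := by
    have hsq : ∀ t, (∑ j, d j * (Set.Ioc 0 (a j)).indicator (1 : ℝ → ℝ) t) ^ 2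
        = ∑ j, ∑ k, d j * d k * ((Set.Ioc 0 (a j)).indicator (1 : ℝ → ℝ) t
            * (Set.Ioc 0 (a k)).indicator (1 : ℝ → ℝ) t) := by
      intro t
      rw [sq, Finset.sum_mul_sum]
      refine Finset.sum_congr rfl fun j _ => Finset.sum_congr rfl fun k _ => by ring
    have hint : ∀ j k, Integrable fun t => d j * d k * ((Set.Ioc 0 (a j)).indicator (1 : ℝ → ℝ) t
            * (Set.Ioc 0 (a k)).indicator (1 : ℝ → ℝ) t) :=
      fun j k => (integrable_indicator_mul_indicator _ _).const_mul _
    simp_rw [hsq]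
    rw [integral_finsetSum _ fun j _ => integrable_finsetSum _ fun k _ => hint j k]
    refine Finset.sum_congr rfl fun j _ => ?_
    rw [integral_finsetSum _ fun k _ => hint j k]
    refine Finset.sum_congr rfl fun k _ => ?_
    rw [integral_const_mul, integral_indicator_mul_indicator (ha j) (ha k)]
  rw [h]
  exact integral_nonneg fun t => sq_nonneg _

lemma real_sign_mul (u v : ℝ) : Real.sign (u * v) = Real.sign u * Real.sign v := by
  rcases lt_trichotomy u 0 with hu | rfl | hu <;> rcases lt_trichotomy v 0 with hv | rfl | hv <;>
    simp [Real.sign_of_neg, Real.sign_of_pos, mul_pos_of_neg_of_neg, mul_neg_of_neg_of_pos,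
      mul_neg_of_pos_of_neg, *]

theorem min1Prod_gram_posSemidef {n N : ℕ} (x : Fin N → Fin n → ℝ) :
    (∀ j k, min1Prod (x j) (x k) = min1Prod (x k) (x j)) ∧
    (∀ c : Fin N → ℝ, 0 ≤ ∑ j, ∑ k, c j * c k * min1Prod (x j) (x k)) := by
  refine ⟨fun j k => ?_, fun c => ?_⟩
  · unfold min1Prod
    refine Finset.sum_congr rfl fun i _ => ?_
    rw [mul_comm (x j i), min_comm]
  · have h : ∑ j, ∑ k, c j * c k * min1Prod (x j) (x k)
        = ∑ i, ∑ j, ∑ k, (c j * Real.sign (x j i)) * (c k * Real.sign (x k i))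
            * min |x j i| |x k i| := by
      rw [Finset.sum_comm]
      simp_rw [min1Prod, Finset.mul_sum]
      rw [Finset.sum_comm]
      rw [Finset.sum_comm (s := (Finset.univ : Finset (Fin n)))]
      refine Finset.sum_congr rfl fun j _ => ?_
      rw [Finset.sum_comm]
      refine Finset.sum_congr rfl fun i _ => Finset.sum_congr rfl fun k _ => ?_
      rw [real_sign_mul]
      ring
    rw [h]
    exact Finset.sum_nonneg fun i _ => min_kernel_nonneg (fun j => |x j i|)
      (fun j => c j * Real.sign (x j i)) fun j => abs_nonneg _
end

section
/- The min2 product is a Mercer-type (positive semidefinite) kernel: for any vectors x_1, …, x_N ∈ ℝⁿ, the N×N Gram matrix K with entries K_{jk} = x_j ⊙_m x_k is symmetric positive semidefinite, i.e. for all c ∈ ℝᴺ, Σ_{j,k} c_j c_k (x_j ⊙_m x_k) ≥ 0. -/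
/-!
The kernel is a sum over coordinates, so it suffices to treat `n = 1`. For reals `a`, `b`, the
number `1(sign a = sign b) * min |a| |b|` is the length of the overlap of the interval between `0`
and `a` with the interval between `0` and `b`, that is, the integral of the product of their
indicator functions. It is therefore an `L²` inner product, and the quadratic form is
`∫ t, (∑ j, c j * 1_{I j} t) ^ 2 ≥ 0`, where `I j` is the interval between `0` and `a j`.
-/

/-- min2 product: `w ⊙ₘ x = ∑ i, 1(sign (w i) = sign (x i)) * min |w i| |x i|`. -/
noncomputable def min2Prod {n : ℕ} (w x : Fin n → ℝ) : ℝ :=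
  ∑ i, (if Real.sign (w i) = Real.sign (x i) then (1 : ℝ) else 0) * min |w i| |x i|

open MeasureTheory in
/-- The one-dimensional kernel is the `L²` inner product of the indicators of the intervals
joining `0` to `a` and to `b`. -/
lemma min2_coord_eq_integral (a b : ℝ) :
    (if Real.sign a = Real.sign b then (1 : ℝ) else 0) * min |a| |b| =
      ∫ t, (Set.uIoc 0 a).indicator 1 t * (Set.uIoc 0 b).indicator (1 : ℝ → ℝ) t := by
  have h : (fun t => (Set.uIoc 0 a).indicator 1 t * (Set.uIoc 0 b).indicator (1 : ℝ → ℝ) t) =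
      (Set.uIoc 0 a ∩ Set.uIoc 0 b).indicator 1 := by
    rw [Set.inter_indicator_one]; rfl
  rw [h, integral_indicator_one (measurableSet_uIoc.inter measurableSet_uIoc),
    Set.uIoc, Set.uIoc, Set.Ioc_inter_Ioc, measureReal_def, Real.volume_Ioc,
    ENNReal.toReal_ofReal']
  rcases lt_trichotomy a 0 with ha | rfl | ha <;> rcases lt_trichotomy b 0 with hb | rfl | hb <;>
    simp only [Real.sign_of_neg, Real.sign_of_pos, Real.sign_zero, abs_of_neg, abs_of_pos,
      abs_zero, *] <;> norm_num <;> grind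

open MeasureTheory in
lemma min2_coord_quadratic_nonneg {N : ℕ} (a c : Fin N → ℝ) :
    0 ≤ ∑ j, ∑ k, c j * c k *
      ((if Real.sign (a j) = Real.sign (a k) then (1 : ℝ) else 0) * min |a j| |a k|) := by
  set f : Fin N → ℝ → ℝ := fun j => (Set.uIoc 0 (a j)).indicator 1 with hf
  have hint : ∀ j k, Integrable (fun t => c j * c k * (f j t * f k t)) := by
    intro j k
    have h : (fun t => f j t * f k t) = (Set.uIoc 0 (a j) ∩ Set.uIoc 0 (a k)).indicator 1 := by
      rw [Set.inter_indicator_one]; rfl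
    refine Integrable.const_mul ?_ _
    rw [h, integrable_indicator_iff (measurableSet_uIoc.inter measurableSet_uIoc)]
    refine integrableOn_const (C := (1 : ℝ)) ?_
    refine measure_ne_top_of_subset Set.inter_subset_left ?_
    rw [Set.uIoc, Real.volume_Ioc]
    exact ENNReal.ofReal_ne_top
  have h : ∑ j, ∑ k, c j * c k *
      ((if Real.sign (a j) = Real.sign (a k) then (1 : ℝ) else 0) * min |a j| |a k|) =
      ∫ t, (∑ j, c j * f j t) ^ 2 := by
    have hsq : ∀ t, (∑ j, c j * f j t) ^ 2 = ∑ j, ∑ k, c j * c k * (f j t * f k t) := by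
      intro t
      rw [sq, Finset.sum_mul_sum]
      exact Finset.sum_congr rfl fun j _ => Finset.sum_congr rfl fun k _ => by ring
    simp_rw [hsq]
    rw [integral_finsetSum _ fun j _ => integrable_finsetSum _ fun k _ => hint j k]
    refine Finset.sum_congr rfl fun j _ => ?_
    rw [integral_finsetSum _ fun k _ => hint j k]
    refine Finset.sum_congr rfl fun k _ => ?_
    rw [integral_const_mul, min2_coord_eq_integral]
  rw [h]
  exact integral_nonneg fun t => sq_nonneg _

theorem min2Prod_gram_posSemidef {n N : ℕ} (x : Fin N → Fin n → ℝ) :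
    (∀ j k, min2Prod (x j) (x k) = min2Prod (x k) (x j)) ∧
    (∀ c : Fin N → ℝ, 0 ≤ ∑ j, ∑ k, c j * c k * min2Prod (x j) (x k)) := by
  refine ⟨fun j k => ?_, fun c => ?_⟩
  · simp only [min2Prod, eq_comm, min_comm]
  · have h : ∑ j, ∑ k, c j * c k * min2Prod (x j) (x k) =
        ∑ i, ∑ j, ∑ k, c j * c k * ((if Real.sign (x j i) = Real.sign (x k i)
          then (1 : ℝ) else 0) * min |x j i| |x k i|) := by
      simp only [min2Prod, Finset.mul_sum]
      rw [Finset.sum_comm (γ := Fin n)]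
      exact Finset.sum_congr rfl fun j _ => Finset.sum_comm
    rw [h]
    exact Finset.sum_nonneg fun i _ => min2_coord_quadratic_nonneg (fun j => x j i) c
end

section
/- Let A be an n×n real matrix (n ≥ 1) with all entries positive, with rows a_1, …, a_n, and let w ∈ ℝⁿ have all entries positive with ‖w‖₁ = 1. Then a single step of the ◊-MAPI iteration maps w to the vector v with entries v_i = (1 + ‖a_i‖₁)/Σ_{j=1}^n (1 + ‖a_j‖₁), i.e. (A ◊ w)/‖A ◊ w‖₁ = v. -/
/-- ◊ product: `w ◊ x = ∑ i, (sign (x i) * w i + x i * sign (w i))`. -/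
noncomputable def diamondProd {n : ℕ} (w x : Fin n → ℝ) : ℝ :=
  ∑ i, (Real.sign (x i) * w i + x i * Real.sign (w i))

/-- `A ◊ w`: the vector whose i-th entry is the ◊ product of the i-th row of `A` with `w`. -/
noncomputable def matDiamond {n : ℕ} (A : Matrix (Fin n) (Fin n) ℝ) (w : Fin n → ℝ) : Fin n → ℝ :=
  fun i => diamondProd (A i) w

/-- ℓ1 norm of a vector in ℝⁿ. -/
def l1Norm {n : ℕ} (x : Fin n → ℝ) : ℝ := ∑ i, |x i|

theorem mapi_step_of_l1Norm_one {n : ℕ} (hn : 1 ≤ n) (A : Matrix (Fin n) (Fin n) ℝ)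
    (w : Fin n → ℝ) (hA : ∀ i j, 0 < A i j) (hw : ∀ i, 0 < w i)
    (hw1 : l1Norm w = 1) :
    (fun i => matDiamond A w i / l1Norm (matDiamond A w)) =
      fun i => (1 + l1Norm (A i)) / ∑ j, (1 + l1Norm (A j)) := by
  -- All signs are `1`, so each entry of `A ◊ w` is `‖w‖₁ + ‖A i‖₁ = 1 + ‖A i‖₁`.
  have entry : ∀ i, matDiamond A w i = 1 + l1Norm (A i) := by
    intro i
    rw [← hw1]
    simp only [matDiamond, diamondProd, l1Norm, ← Finset.sum_add_distrib]
    refine Finset.sum_congr rfl fun j _ => ?_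
    rw [Real.sign_of_pos (hw j), Real.sign_of_pos (hA i j), abs_of_pos (hw j),
      abs_of_pos (hA i j)]
    ring
  -- These entries are nonnegative, so the normalizing `ℓ1` norm is their plain sum.
  have norm_eq : l1Norm (matDiamond A w) = ∑ j, (1 + l1Norm (A j)) := by
    unfold l1Norm
    refine Finset.sum_congr rfl fun j _ => ?_
    rw [entry j]
    exact abs_of_nonneg (add_nonneg zero_le_one (Finset.sum_nonneg fun k _ => abs_nonneg _))
  funext i
  rw [entry i, norm_eq]
end

section
/- Let A be an n×n real matrix (n ≥ 1) with all entries positive, with rows a_1, …, a_n, and let v ∈ ℝⁿ be the vector with entries v_i = (1 + ‖a_i‖₁)/Σ_{j=1}^n (1 + ‖a_j‖₁). Then v is a fixed point of the ◊-MAPI iteration: (A ◊ v)/‖A ◊ v‖₁ = v. -/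
theorem diamondProd_of_pos {n : ℕ} {w x : Fin n → ℝ} (hw : ∀ i, 0 < w i) (hx : ∀ i, 0 < x i) :
    diamondProd w x = l1Norm w + l1Norm x := by
  unfold diamondProd l1Norm
  rw [← Finset.sum_add_distrib]
  refine Finset.sum_congr rfl fun i _ => ?_
  rw [Real.sign_of_pos (hw i), Real.sign_of_pos (hx i), abs_of_pos (hw i), abs_of_pos (hx i),
    one_mul, mul_one]

theorem mapi_fixed_point {n : ℕ} (hn : 1 ≤ n) (A : Matrix (Fin n) (Fin n) ℝ)
    (hA : ∀ i j, 0 < A i j)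
    (v : Fin n → ℝ)
    (hv : v = fun i => (1 + l1Norm (A i)) / ∑ j, (1 + l1Norm (A j))) :
    (fun i => matDiamond A v i / l1Norm (matDiamond A v)) = v := by
  have hpos : ∀ i, 0 < 1 + l1Norm (A i) := fun i =>
    add_pos_of_pos_of_nonneg one_pos (Finset.sum_nonneg fun _ _ => abs_nonneg _)
  have hS : 0 < ∑ j, (1 + l1Norm (A j)) :=
    Finset.sum_pos (fun i _ => hpos i) ⟨⟨0, hn⟩, Finset.mem_univ _⟩
  have hvpos : ∀ i, 0 < v i := fun i => by
    rw [hv]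
    exact div_pos (hpos i) hS
  have hv1 : l1Norm v = 1 := by
    unfold l1Norm
    rw [Finset.sum_congr rfl fun i _ => abs_of_pos (hvpos i), hv, ← Finset.sum_div,
      div_self hS.ne']
  have hAv : matDiamond A v = fun i => 1 + l1Norm (A i) := by
    funext i
    unfold matDiamond
    rw [diamondProd_of_pos (hA i) hvpos, hv1, add_comm]
  have hnorm : l1Norm (matDiamond A v) = ∑ j, (1 + l1Norm (A j)) := by
    rw [hAv]
    exact Finset.sum_congr rfl fun i _ => abs_of_pos (hpos i)
  rw [hnorm, hAv, hv]
end

section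
/- (Proposition 1) Let A be an n×n real matrix (n ≥ 1) with all entries positive, with rows a_1, …, a_n, and let b ∈ ℝⁿ have all entries positive. Define the sequence w_0 = b and w_{t+1} = (A ◊ w_t)/‖A ◊ w_t‖₁. Then the iteration converges in at most two steps: for every t ≥ 2, w_t equals the vector v with entries v_i = (1 + ‖a_i‖₁)/Σ_{j=1}^n (1 + ‖a_j‖₁). -/
lemma l1Norm_of_pos {n : ℕ} {x : Fin n → ℝ} (hx : ∀ i, 0 < x i) : l1Norm x = ∑ i, x i :=
  Finset.sum_congr rfl fun i _ => abs_of_pos (hx i)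

lemma l1Norm_nonneg {n : ℕ} (x : Fin n → ℝ) : 0 ≤ l1Norm x :=
  Finset.sum_nonneg fun i _ => abs_nonneg (x i)

lemma l1Norm_pos {n : ℕ} (hn : 1 ≤ n) {x : Fin n → ℝ} (hx : ∀ i, 0 < x i) : 0 < l1Norm x := by
  rw [l1Norm_of_pos hx]
  exact Finset.sum_pos (fun i _ => hx i) ⟨⟨0, hn⟩, Finset.mem_univ _⟩

lemma matDiamond_of_pos {n : ℕ} {A : Matrix (Fin n) (Fin n) ℝ} (hA : ∀ i j, 0 < A i j)
    {w : Fin n → ℝ} (hw : ∀ i, 0 < w i) (i : Fin n) :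
    matDiamond A w i = l1Norm w + l1Norm (A i) := by
  rw [matDiamond, diamondProd, l1Norm_of_pos hw, l1Norm_of_pos (hA i), ← Finset.sum_add_distrib]
  refine Finset.sum_congr rfl fun j _ => ?_
  rw [Real.sign_of_pos (hw j), Real.sign_of_pos (hA i j)]
  ring

/-- Proposition 1: the ◊-MAPI iteration on a positive matrix, started from a positive
vector, converges in at most two steps to the vector with entries
`(1 + ‖aᵢ‖₁) / ∑ⱼ (1 + ‖aⱼ‖₁)`. -/
theorem mapi_converges_in_two_steps {n : ℕ} (hn : 1 ≤ n)
    (A : Matrix (Fin n) (Fin n) ℝ) (hA : ∀ i j, 0 < A i j)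
    (b : Fin n → ℝ) (hb : ∀ i, 0 < b i)
    (w : ℕ → Fin n → ℝ) (hw0 : w 0 = b)
    (hwt : ∀ t, w (t + 1) = fun i =>
      matDiamond A (w t) i / l1Norm (matDiamond A (w t))) :
    ∀ t, 2 ≤ t →
      w t = fun i => (1 + l1Norm (A i)) / ∑ j, (1 + l1Norm (A j)) := by
  have hmat : ∀ x : Fin n → ℝ, (∀ i, 0 < x i) → ∀ i, 0 < matDiamond A x i := fun x hx i => by
    rw [matDiamond_of_pos hA hx]
    exact add_pos_of_pos_of_nonneg (l1Norm_pos hn hx) (l1Norm_nonneg _)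
  have hpos : ∀ t i, 0 < w t i := by
    intro t
    induction t with
    | zero => rw [hw0]; exact hb
    | succ t ih =>
      intro i
      rw [hwt]
      exact div_pos (hmat _ ih i) (l1Norm_pos hn (hmat _ ih))
  have hnorm : ∀ t, l1Norm (w (t + 1)) = 1 := by
    intro t
    have hm := hmat _ (hpos t)
    rw [l1Norm_of_pos (hpos (t + 1)), hwt, ← Finset.sum_div, ← l1Norm_of_pos hm]
    exact div_self (l1Norm_pos hn hm).ne'
  intro t ht
  obtain ⟨s, rfl⟩ := Nat.exists_eq_add_of_le' ht
  have hp := hpos (s + 1)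
  have hentry : ∀ i, matDiamond A (w (s + 1)) i = 1 + l1Norm (A i) := fun i => by
    rw [matDiamond_of_pos hA hp, hnorm]
  rw [hwt (s + 1), l1Norm_of_pos (hmat _ hp)]
  simp only [hentry]
end
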